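/- Let Ω ⊂ ℝ² be a bounded open set, K ∈ ℕ, and let u : ℝ² → ℝ^K be C². Define φ := |u_x|² − |u_y|² − 2i⟨u_x, u_y⟩ and the energy E := ½ ∫_Ω (|u_x|² + |u_y|²) dA. Then ∫_Ω |∂_z̄ φ| dA ≤ √2 · (∫_Ω |Δu|² dA)^{1/2} · E^{1/2}, where Δu := u_{xx} + u_{yy}. -/

import Mathlib

/-!
Writing `u_x`, `u_y` for the partial derivatives, the product rule and the symmetry `u_xy = u_yx`
give the pointwise identity `∂_z̄ φ = ⟪u_x, Δu⟫ - i ⟪u_y, Δu⟫` (`dbar_hopf`): the terms with mixed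
second derivatives cancel. By Cauchy–Schwarz in `ℝ^K`, `|∂_z̄ φ| ≤ |Δu| (|u_x|² + |u_y|²)^{1/2}`,
and Cauchy–Schwarz in `L²(Ω)` (`integral_mul_le_sqrt`) bounds the integral by
`(∫ |Δu|²)^{1/2} (2E)^{1/2}`. All functions involved are continuous on `ℂ`, hence square
integrable on the bounded set `Ω`.
-/

open MeasureTheory Metric RealInnerProductSpace

/-- The Wirtinger derivative `∂_z̄ φ := ½(∂φ/∂x + i ∂φ/∂y)` of a function `φ : ℂ → ℂ`,
where `ℝ²` is identified with `ℂ` via `(x, y) ↦ x + iy`. -/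
noncomputable def dbar (φ : ℂ → ℂ) (z : ℂ) : ℂ :=
  (1 / 2) * (fderiv ℝ φ z 1 + Complex.I * fderiv ℝ φ z Complex.I)

/-- Pointwise form of the Hopf differential identity, for maps `p`, `q` (playing the roles of `u_x`
and `u_y`) whose derivatives `P`, `Q` satisfy the compatibility condition `P i = Q 1`. -/
lemma dbar_hopf {F : Type*} [NormedAddCommGroup F] [InnerProductSpace ℝ F]
    {p q : ℂ → F} {P Q : ℂ →L[ℝ] F} {z : ℂ}
    (hp : HasFDerivAt p P z) (hq : HasFDerivAt q Q z) (hsymm : P Complex.I = Q 1) :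
    dbar (fun z => ((‖p z‖ ^ 2 - ‖q z‖ ^ 2 : ℝ) : ℂ)
      - 2 * Complex.I * ((⟪p z, q z⟫ : ℝ) : ℂ)) z
      = ((⟪p z, P 1 + Q Complex.I⟫ : ℝ) : ℂ)
        - Complex.I * ((⟪q z, P 1 + Q Complex.I⟫ : ℝ) : ℂ) := by
  have h1 := Complex.ofRealCLM.hasFDerivAt.comp z (hp.norm_sq.sub hq.norm_sq)
  have h2 := (Complex.ofRealCLM.hasFDerivAt.comp z (hp.inner ℝ hq)).const_mul (2 * Complex.I)
  have h : HasFDerivAt (fun z => ((‖p z‖ ^ 2 - ‖q z‖ ^ 2 : ℝ) : ℂ)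
      - 2 * Complex.I * ((⟪p z, q z⟫ : ℝ) : ℂ)) _ z := h1.sub h2
  unfold dbar
  rw [h.fderiv]
  apply Complex.ext <;>
  · simp [inner_add_right, hsymm]
    linarith [real_inner_comm (q z) (Q 1), real_inner_comm (q z) (P 1)]

lemma norm_sub_I_mul_inner_le {F : Type*} [NormedAddCommGroup F] [InnerProductSpace ℝ F]
    (a b v : F) :
    ‖((⟪a, v⟫ : ℝ) : ℂ) - Complex.I * ((⟪b, v⟫ : ℝ) : ℂ)‖
      ≤ ‖v‖ * Real.sqrt (‖a‖ ^ 2 + ‖b‖ ^ 2) := by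
  have ha : ⟪a, v⟫ ^ 2 ≤ (‖a‖ * ‖v‖) ^ 2 :=
    sq_le_sq' (neg_le_of_abs_le (abs_real_inner_le_norm a v)) (real_inner_le_norm a v)
  have hb : ⟪b, v⟫ ^ 2 ≤ (‖b‖ * ‖v‖) ^ 2 :=
    sq_le_sq' (neg_le_of_abs_le (abs_real_inner_le_norm b v)) (real_inner_le_norm b v)
  refine le_of_sq_le_sq ?_ (by positivity)
  rw [Complex.sq_norm, mul_pow, Real.sq_sqrt (by positivity), Complex.normSq_apply]
  simp
  nlinarith

lemma memLp_two_of_continuous {Ω : Set ℂ} (hb : Bornology.IsBounded Ω) {f : ℂ → ℝ}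
    (hf : Continuous f) : MemLp f 2 (volume.restrict Ω) := by
  rw [memLp_two_iff_integrable_sq hf.aestronglyMeasurable]
  exact ((hf.pow 2).continuousOn.integrableOn_compact hb.isCompact_closure).mono_set
    subset_closure

lemma integral_mul_le_sqrt {Ω : Set ℂ} (hb : Bornology.IsBounded Ω) {f g : ℂ → ℝ}
    (hf : Continuous f) (hg : Continuous g) (hf0 : ∀ z, 0 ≤ f z) (hg0 : ∀ z, 0 ≤ g z) :
    ∫ z in Ω, f z * g z
      ≤ Real.sqrt (∫ z in Ω, f z ^ 2) * Real.sqrt (∫ z in Ω, g z ^ 2) := by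
  have h := integral_mul_le_Lp_mul_Lq_of_nonneg (μ := volume.restrict Ω)
    Real.HolderConjugate.two_two (f := f) (g := g) (.of_forall hf0) (.of_forall hg0)
    (by simpa using memLp_two_of_continuous hb hf) (by simpa using memLp_two_of_continuous hb hg)
  simpa [Real.sqrt_eq_rpow] using h

/-- For a bounded open set `Ω ⊆ ℝ² ≅ ℂ` and a `C²` map `u : ℝ² → ℝ^K`, with
Hopf differential coefficient `φ := |u_x|² − |u_y|² − 2i⟨u_x, u_y⟩` and energy
`E := ½∫_Ω (|u_x|² + |u_y|²)`, one has
`∫_Ω |∂_z̄ φ| dA ≤ √2 (∫_Ω |Δu|² dA)^{1/2} E^{1/2}` where `Δu := u_{xx} + u_{yy}`. -/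
theorem stmt_10 (Ω : Set ℂ) (hΩo : IsOpen Ω) (hΩb : Bornology.IsBounded Ω)
    (K : ℕ) (u : ℂ → EuclideanSpace ℝ (Fin K)) (hu : ContDiff ℝ 2 u)
    (ux uy lap : ℂ → EuclideanSpace ℝ (Fin K)) (φ : ℂ → ℂ) (E : ℝ)
    (hux : ux = fun z => fderiv ℝ u z 1)
    (huy : uy = fun z => fderiv ℝ u z Complex.I)
    (hlap : lap = fun z =>
      fderiv ℝ (fun w => fderiv ℝ u w 1) z 1 + fderiv ℝ (fun w => fderiv ℝ u w Complex.I) z Complex.I)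
    (hφ : φ = fun z => ((‖ux z‖ ^ 2 - ‖uy z‖ ^ 2 : ℝ) : ℂ)
      - 2 * Complex.I * ((⟪ux z, uy z⟫ : ℝ) : ℂ))
    (hE : E = (1 / 2) * ∫ z in Ω, (‖ux z‖ ^ 2 + ‖uy z‖ ^ 2)) :
    (∫ z in Ω, ‖dbar φ z‖)
      ≤ Real.sqrt 2 * Real.sqrt (∫ z in Ω, ‖lap z‖ ^ 2) * Real.sqrt E := by
  have hD : ContDiff ℝ 1 (fderiv ℝ u) := hu.fderiv_right (by norm_num)
  have hcd (v : ℂ) : ContDiff ℝ 1 (fun w => fderiv ℝ u w v) := hD.clm_apply contDiff_const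
  have hdiff (v z : ℂ) : DifferentiableAt ℝ (fun w => fderiv ℝ u w v) z :=
    (hcd v).differentiable one_ne_zero z
  have hsnd (v w z : ℂ) : fderiv ℝ (fun w => fderiv ℝ u w v) z w
      = fderiv ℝ (fderiv ℝ u) z w v := by
    rw [fderiv_clm_apply (hD.differentiable one_ne_zero z) (by fun_prop)]
    simp
  have hcux : Continuous ux := hux ▸ (hcd 1).continuous
  have hcuy : Continuous uy := huy ▸ (hcd Complex.I).continuous
  have hclap : Continuous lap := by
    rw [hlap]
    exact (((hcd 1).continuous_fderiv one_ne_zero).clm_apply continuous_const).add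
      (((hcd Complex.I).continuous_fderiv one_ne_zero).clm_apply continuous_const)
  have hcsqrt : Continuous fun z => Real.sqrt (‖ux z‖ ^ 2 + ‖uy z‖ ^ 2) := by fun_prop
  have hpt (z : ℂ) : ‖dbar φ z‖ ≤ ‖lap z‖ * Real.sqrt (‖ux z‖ ^ 2 + ‖uy z‖ ^ 2) := by
    have hsymm : fderiv ℝ ux z Complex.I = fderiv ℝ uy z 1 := by
      rw [hux, huy, hsnd, hsnd]
      exact hu.contDiffAt.isSymmSndFDerivAt (by simp) _ _
    have hdx : DifferentiableAt ℝ ux z := hux ▸ hdiff 1 z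
    have hdy : DifferentiableAt ℝ uy z := huy ▸ hdiff Complex.I z
    have hl : lap z = fderiv ℝ ux z 1 + fderiv ℝ uy z Complex.I := by rw [hlap, hux, huy]
    rw [hφ, dbar_hopf hdx.hasFDerivAt hdy.hasFDerivAt hsymm, ← hl]
    exact norm_sub_I_mul_inner_le _ _ _
  have hint : IntegrableOn (fun z => ‖lap z‖ * Real.sqrt (‖ux z‖ ^ 2 + ‖uy z‖ ^ 2)) Ω :=
    (memLp_two_of_continuous hΩb hclap.norm).integrable_mul (memLp_two_of_continuous hΩb hcsqrt)
  calc ∫ z in Ω, ‖dbar φ z‖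
      ≤ ∫ z in Ω, ‖lap z‖ * Real.sqrt (‖ux z‖ ^ 2 + ‖uy z‖ ^ 2) :=
        integral_mono_of_nonneg (.of_forall fun _ => norm_nonneg _) hint (.of_forall hpt)
    _ ≤ Real.sqrt (∫ z in Ω, ‖lap z‖ ^ 2)
          * Real.sqrt (∫ z in Ω, Real.sqrt (‖ux z‖ ^ 2 + ‖uy z‖ ^ 2) ^ 2) :=
        integral_mul_le_sqrt hΩb hclap.norm hcsqrt (fun _ => norm_nonneg _)
          (fun _ => Real.sqrt_nonneg _)
    _ = Real.sqrt (∫ z in Ω, ‖lap z‖ ^ 2) * Real.sqrt (2 * E) := by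
        have h2E : ∫ z in Ω, Real.sqrt (‖ux z‖ ^ 2 + ‖uy z‖ ^ 2) ^ 2 = 2 * E := by
          rw [hE, ← mul_assoc, mul_one_div_cancel two_ne_zero, one_mul]
          congr 1 with z
          exact Real.sq_sqrt (by positivity)
        rw [h2E]
    _ = Real.sqrt 2 * Real.sqrt (∫ z in Ω, ‖lap z‖ ^ 2) * Real.sqrt E := by
        rw [Real.sqrt_mul zero_le_two]
        ring
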